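/- Let n ≥ 1 and let x_i, y_i, a_i, b_i, c_i, d_i (1≤i≤2n) be variables. Then Pf[ (a_i b_j − a_j b_i)(c_i d_j − c_j d_i)/(x_i y_j − x_j y_i) ]_{1≤i<j≤2n} = V^n(X,Y;A,B) · V^n(X,Y;C,D) / Π_{1≤i<j≤2n}(x_i y_j − x_j y_i). -/

import Mathlib

open Finset

def pfMatchings (n : ℕ) : Finset (Equiv.Perm (Fin (2 * n))) :=
  Finset.univ.filter (fun σ =>
    (∀ i : Fin n, σ ⟨2 * i.1, by have := i.2; omega⟩ < σ ⟨2 * i.1 + 1, by have := i.2; omega⟩) ∧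
    (∀ i j : Fin n, i < j →
      σ ⟨2 * i.1, by have := i.2; omega⟩ < σ ⟨2 * j.1, by have := j.2; omega⟩))

def pf {R : Type*} [CommRing R] {n : ℕ} (A : Matrix (Fin (2 * n)) (Fin (2 * n)) R) : R :=
  ∑ σ ∈ pfMatchings n,
    ((Equiv.Perm.sign σ : ℤ) : R) *
      ∏ i : Fin n,
        A (σ ⟨2 * i.1, by have := i.2; omega⟩) (σ ⟨2 * i.1 + 1, by have := i.2; omega⟩)

/-- `V^n(X,Y;A,B)`: the determinant of the `2n × 2n` matrix whose `(i,j)` entry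
(0-indexed columns) is `a_i x_i^{n−1−j} y_i^j` for `j < n` and
`b_i x_i^{2n−1−j} y_i^{j−n}` for `n ≤ j < 2n`. -/
def Vdet {R : Type*} [CommRing R] (n : ℕ) (x y a b : Fin (2 * n) → R) : R :=
  Matrix.det (Matrix.of fun i j : Fin (2 * n) =>
    if (j : ℕ) < n then a i * x i ^ (n - 1 - (j : ℕ)) * y i ^ (j : ℕ)
    else b i * x i ^ (2 * n - 1 - (j : ℕ)) * y i ^ ((j : ℕ) - n))

/-!
Both sides, multiplied by the denominator, are expanded along the index `0`. The product
`V^n(X,Y;A,B) V^n(X,Y;C,D)` is a binary form of degree `2n - 2` in `(x_0, y_0)`, so it is determined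
by its values at the `2n - 1` points `(x_k, y_k)`, `k ≠ 0`. At such a point two rows of each matrix
involve the same `(x, y)`, and a column operation splits off the minors of `(a | b)` and `(c | d)`
on these rows, leaving the two determinants of size `2n - 2`. Lagrange interpolation at these points
is the expansion of the Pfaffian along its first row. It divides by `x_k` and by the minors of
`(x | y)`, so it is carried out over the polynomial ring in generic variables and then specialised.
-/

section PairPermutations

open Equiv

variable {m : ℕ}

/-- The permutation `0, 1, 2, … ↦ 0, k + 1, …` listing the indices other than `0` and `k + 1`
increasingly; it brings the pair `{0, k + 1}` to the front. -/
def frontPair (k : Fin (m + 1)) : Perm (Fin (m + 2)) :=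
  Perm.decomposeFin.symm (0, k.cycleRange.symm)

/-- The increasing enumeration of the indices other than `0` and `k + 1`, used to delete
the corresponding rows and columns. -/
def skipPair (k : Fin (m + 1)) (l : Fin m) : Fin (m + 2) := (k.succAbove l).succ

/-- The permutation that sends the pair `(0, 1)` to `(0, k + 1)` and acts by `τ` on the
remaining indices. -/
def insertPair (k : Fin (m + 1)) (τ : Perm (Fin m)) : Perm (Fin (m + 2)) :=
  frontPair k * Perm.decomposeFin.symm (0, Perm.decomposeFin.symm (0, τ))

lemma skipPair_strictMono (k : Fin (m + 1)) : StrictMono (skipPair k) :=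
  (Fin.strictMono_succ).comp (Fin.strictMono_succAbove k)

lemma skipPair_pos (k : Fin (m + 1)) (l : Fin m) : 0 < skipPair k l := Fin.succ_pos _

lemma exists_skipPair_eq {j k : Fin (m + 1)} (h : j ≠ k) : ∃ l, skipPair k l = j.succ :=
  (Fin.exists_succAbove_eq h).imp fun _ hl => congrArg Fin.succ hl

@[simp]
lemma frontPair_zero (k : Fin (m + 1)) : frontPair k 0 = 0 :=
  Perm.decomposeFin_symm_apply_zero _ _

@[simp]
lemma frontPair_one (k : Fin (m + 1)) : frontPair k 1 = k.succ := by
  simp [frontPair]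

@[simp]
lemma frontPair_succ_succ (k : Fin (m + 1)) (l : Fin m) :
    frontPair k l.succ.succ = skipPair k l := by
  simp [frontPair, skipPair]

@[simp]
lemma sign_frontPair (k : Fin (m + 1)) : Perm.sign (frontPair k) = (-1) ^ (k : ℕ) := by
  simp [frontPair]

@[simp]
lemma insertPair_zero (k : Fin (m + 1)) (τ : Perm (Fin m)) : insertPair k τ 0 = 0 := by
  simp [insertPair]

@[simp]
lemma insertPair_one (k : Fin (m + 1)) (τ : Perm (Fin m)) : insertPair k τ 1 = k.succ := by
  simp [insertPair]

@[simp]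
lemma insertPair_succ_succ (k : Fin (m + 1)) (τ : Perm (Fin m)) (l : Fin m) :
    insertPair k τ l.succ.succ = skipPair k (τ l) := by
  simp [insertPair]

lemma sign_insertPair (k : Fin (m + 1)) (τ : Perm (Fin m)) :
    Perm.sign (insertPair k τ) = (-1) ^ (k : ℕ) * Perm.sign τ := by
  simp [insertPair]

lemma insertPair_inj {k k' : Fin (m + 1)} {τ τ' : Perm (Fin m)} :
    insertPair k τ = insertPair k' τ' ↔ k = k' ∧ τ = τ' := by
  refine ⟨fun h => ?_, by rintro ⟨rfl, rfl⟩; rfl⟩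
  obtain rfl : k = k' := by simpa using Equiv.congr_fun h 1
  simpa [insertPair] using h

lemma exists_decomposeFin_symm_zero_eq {σ : Perm (Fin (m + 1))} (h : σ 0 = 0) :
    ∃ τ, Perm.decomposeFin.symm (0, τ) = σ := by
  obtain ⟨⟨p, τ⟩, rfl⟩ := Perm.decomposeFin.symm.surjective σ
  obtain rfl : p = 0 := by simpa using h
  exact ⟨τ, rfl⟩

lemma exists_insertPair_eq {σ : Perm (Fin (m + 2))} (h : σ 0 = 0) :
    ∃ k τ, insertPair k τ = σ := by
  obtain ⟨ρ, rfl⟩ := exists_decomposeFin_symm_zero_eq h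
  obtain ⟨τ, hτ⟩ : ∃ τ, Perm.decomposeFin.symm (0, τ) = (ρ 0).cycleRange * ρ :=
    exists_decomposeFin_symm_zero_eq (by simp)
  refine ⟨ρ 0, τ, Equiv.ext fun i => ?_⟩
  rw [insertPair, hτ]
  cases i using Fin.cases <;> simp [frontPair]

end PairPermutations

section Pfaffian

open Equiv

variable {R : Type*} [CommRing R] {n : ℕ}

/-- The first position `2i` of the `i`-th pair of a matching. -/
def fstPos (i : Fin n) : Fin (2 * n) := ⟨2 * i.1, by have := i.2; omega⟩

/-- The second position `2i + 1` of the `i`-th pair of a matching. -/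
def sndPos (i : Fin n) : Fin (2 * n) := ⟨2 * i.1 + 1, by have := i.2; omega⟩

lemma fstPos_zero : fstPos (0 : Fin (n + 1)) = (0 : Fin (2 * n + 2)) := rfl

lemma sndPos_zero : sndPos (0 : Fin (n + 1)) = (1 : Fin (2 * n + 2)) := rfl

lemma fstPos_succ (i : Fin n) : fstPos i.succ = (fstPos i).succ.succ := rfl

lemma sndPos_succ (i : Fin n) : sndPos i.succ = (sndPos i).succ.succ := rfl

lemma eq_fstPos_or_eq_sndPos (p : Fin (2 * n)) : ∃ i, p = fstPos i ∨ p = sndPos i :=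
  ⟨⟨p / 2, by omega⟩, by simp only [fstPos, sndPos, Fin.ext_iff]; omega⟩

lemma mem_pfMatchings {σ : Perm (Fin (2 * n))} :
    σ ∈ pfMatchings n ↔
      (∀ i, σ (fstPos i) < σ (sndPos i)) ∧ ∀ i j, i < j → σ (fstPos i) < σ (fstPos j) := by
  simp only [pfMatchings, Finset.mem_filter, Finset.mem_univ, true_and, fstPos, sndPos]

lemma apply_zero_of_mem_pfMatchings {σ : Perm (Fin (2 * n + 2))}
    (h : σ ∈ pfMatchings (n + 1)) : σ 0 = 0 := by
  obtain ⟨h_pair, h_fst⟩ := mem_pfMatchings.1 h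
  have h_le_fst (i : Fin (n + 1)) : σ 0 ≤ σ (fstPos i) := by
    obtain rfl | hi := eq_or_ne i 0
    · rfl
    · exact (h_fst 0 i (Fin.pos_iff_ne_zero.2 hi)).le
  obtain ⟨p, hp⟩ := σ.surjective 0
  have h_le : σ 0 ≤ σ p := by
    obtain ⟨i, rfl | rfl⟩ := eq_fstPos_or_eq_sndPos (n := n + 1) p
    exacts [h_le_fst i, (h_le_fst i).trans (h_pair i).le]
  exact Fin.le_zero_iff.1 (hp ▸ h_le)

lemma insertPair_mem_pfMatchings {k : Fin (2 * n + 1)} {τ : Perm (Fin (2 * n))} :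
    insertPair k τ ∈ pfMatchings (n + 1) ↔ τ ∈ pfMatchings n := by
  rw [mem_pfMatchings, mem_pfMatchings, Fin.forall_fin_succ]
  simp only [Fin.forall_fin_succ (n := n)]
  simp [fstPos_zero, sndPos_zero, fstPos_succ, sndPos_succ, skipPair_pos,
    (skipPair_strictMono k).lt_iff_lt]

lemma pf_eq_sum (A : Matrix (Fin (2 * n)) (Fin (2 * n)) R) :
    pf A = ∑ σ ∈ pfMatchings n,
      ((Perm.sign σ : ℤ) : R) * ∏ i, A (σ (fstPos i)) (σ (sndPos i)) := rfl

lemma pf_zero (A : Matrix (Fin (2 * 0)) (Fin (2 * 0)) R) : pf A = 1 := by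
  have h : pfMatchings 0 = {1} := by decide
  simp [pf, h]

theorem pf_succ (A : Matrix (Fin (2 * n + 2)) (Fin (2 * n + 2)) R) :
    pf (n := n + 1) A = ∑ k : Fin (2 * n + 1), (-1) ^ (k : ℕ) * A 0 k.succ *
      pf (n := n) (A.submatrix (skipPair k) (skipPair k)) := by
  simp only [pf_eq_sum, Finset.mul_sum]
  rw [← Finset.sum_product']
  symm
  refine Finset.sum_bij (fun p _ => insertPair p.1 p.2) ?_ ?_ ?_ ?_
  · rintro ⟨k, τ⟩ h
    exact insertPair_mem_pfMatchings.2 (by simpa using h)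
  · rintro ⟨k, τ⟩ - ⟨k', τ'⟩ - h
    exact Prod.ext_iff.2 (insertPair_inj.1 h)
  · intro σ h
    obtain ⟨k, τ, rfl⟩ := exists_insertPair_eq (apply_zero_of_mem_pfMatchings h)
    exact ⟨(k, τ), by simpa using insertPair_mem_pfMatchings.1 h, rfl⟩
  · rintro ⟨k, τ⟩ -
    simp only [Fin.prod_univ_succ, fstPos_zero, sndPos_zero, fstPos_succ, sndPos_succ,
      insertPair_zero, insertPair_one, insertPair_succ_succ, sign_insertPair,
      Matrix.submatrix_apply]
    push_cast
    ring

end Pfaffian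

section Bracket

variable {ι R : Type*} [CommRing R]

/-- The `2 × 2` minor of the two-column matrix `(x | y)` on the rows `i` and `j`. -/
def bracket (x y : ι → R) (i j : ι) : R := x i * y j - x j * y i

lemma bracket_swap (x y : ι → R) (i j : ι) : bracket x y i j = -bracket x y j i :=
  (neg_sub _ _).symm

lemma map_bracket {S : Type*} [CommRing S] (f : R →+* S) (x y : ι → R) (i j : ι) :
    f (bracket x y i j) = bracket (f ∘ x) (f ∘ y) i j := by
  simp [bracket]

lemma prod_bracket_eq_det_projVandermonde {m : ℕ} (x y : Fin m → R) :
    ∏ i, ∏ j ∈ Ioi i, bracket x y i j = (Matrix.projVandermonde y x).det := by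
  rw [Matrix.det_projVandermonde]
  exact prod_congr rfl fun i _ => prod_congr rfl fun j _ => by rw [bracket]; ring

lemma prod_bracket_eq_skipPair {m : ℕ} (x y : Fin (m + 2) → R) (k : Fin (m + 1)) :
    ∏ i, ∏ j ∈ Ioi i, bracket x y i j =
      (-1) ^ (k : ℕ) * (bracket x y 0 k.succ *
        (∏ l, bracket x y 0 (skipPair k l)) * (∏ l, bracket x y k.succ (skipPair k l)) *
          ∏ i, ∏ j ∈ Ioi i, bracket (x ∘ skipPair k) (y ∘ skipPair k) i j) := by
  have h_perm := (frontPair k).prod_Ioi_comp_eq_sign_mul_prod (bracket_swap x y)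
  have h_front : ∏ i, ∏ j ∈ Ioi i, bracket x y (frontPair k i) (frontPair k j) =
      bracket x y 0 k.succ * (∏ l, bracket x y 0 (skipPair k l)) *
        (∏ l, bracket x y k.succ (skipPair k l)) *
          ∏ i, ∏ j ∈ Ioi i, bracket (x ∘ skipPair k) (y ∘ skipPair k) i j := by
    simp only [Fin.prod_univ_succ, Fin.prod_Ioi_zero, Fin.prod_Ioi_succ, frontPair_zero,
      Fin.succ_zero_eq_one, frontPair_one, frontPair_succ_succ, mul_assoc]
    rfl
  rw [← h_front, h_perm, sign_frontPair]
  push_cast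
  rw [← mul_assoc, ← mul_pow, neg_one_mul, neg_neg, one_pow, one_mul]

end Bracket

section BinaryForms

variable {R : Type*} [CommRing R]

/-- Functions on `R × R` given by binary forms of degree `d`. The monomials are ordered as the
columns of `Matrix.projVandermonde`. -/
def binaryForms (R : Type*) [CommRing R] (d : ℕ) : Submodule R (R × R → R) :=
  Submodule.span R (Set.range fun (j : Fin (d + 1)) p => p.2 ^ (j : ℕ) * p.1 ^ (j.rev : ℕ))

lemma monomial_mem_binaryForms {d i j : ℕ} (h : i + j = d) :
    (fun p : R × R => p.1 ^ i * p.2 ^ j) ∈ binaryForms R d := by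
  refine Submodule.subset_span ⟨⟨j, by omega⟩, funext fun p => ?_⟩
  have h_rev : d + 1 - (j + 1) = i := by omega
  simp only [Fin.val_rev, h_rev, mul_comm]

lemma const_mul_mem_binaryForms {d : ℕ} {f : R × R → R} (hf : f ∈ binaryForms R d) (c : R) :
    (fun p => c * f p) ∈ binaryForms R d :=
  Submodule.smul_mem _ c hf

lemma mul_mem_binaryForms {d e : ℕ} {f g : R × R → R} (hf : f ∈ binaryForms R d)
    (hg : g ∈ binaryForms R e) : f * g ∈ binaryForms R (d + e) := by
  have h := Submodule.mul_mem_mul hf hg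
  rw [binaryForms, binaryForms, Submodule.span_mul_span] at h
  refine Submodule.span_le.2 ?_ h
  rintro _ ⟨_, ⟨i, rfl⟩, _, ⟨j, rfl⟩, rfl⟩
  have h_deg : (i.rev + j.rev + (i + j) : ℕ) = d + e := by simp only [Fin.val_rev]; omega
  have h_mem := monomial_mem_binaryForms (R := R) h_deg
  rw [SetLike.mem_coe]
  convert h_mem using 1
  funext p
  simp only [Pi.mul_apply]
  ring

lemma prod_linear_mem_binaryForms {m : ℕ} (u v : Fin m → R) :
    (fun p : R × R => ∏ l, (p.1 * v l - u l * p.2)) ∈ binaryForms R m := by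
  induction m with
  | zero => simpa using monomial_mem_binaryForms (R := R) (i := 0) (j := 0) rfl
  | succ m ih =>
    simp only [Fin.prod_univ_castSucc]
    refine mul_mem_binaryForms (ih _ _) ?_
    convert Submodule.sub_mem _
      (const_mul_mem_binaryForms (monomial_mem_binaryForms (Nat.add_zero 1)) (v (Fin.last m)))
      (const_mul_mem_binaryForms (monomial_mem_binaryForms (Nat.zero_add 1)) (u (Fin.last m)))
      using 1
    funext p
    simp only [Pi.sub_apply]
    ring

lemma binaryForms_eq_zero_of_forall_eq_zero [IsDomain R] {d : ℕ} {f : R × R → R}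
    (hf : f ∈ binaryForms R d) {x y : Fin (d + 1) → R} (hxy : ∀ i j, i ≠ j → bracket x y i j ≠ 0)
    (h_zero : ∀ i, f (x i, y i) = 0) : f = 0 := by
  obtain ⟨c, rfl⟩ := (Submodule.mem_span_range_iff_exists_fun R).1 hf
  have h_det : (Matrix.projVandermonde y x).det ≠ 0 := by
    rw [← prod_bracket_eq_det_projVandermonde]
    exact prod_ne_zero_iff.2 fun i _ => prod_ne_zero_iff.2 fun j hj => hxy i j (mem_Ioi.1 hj).ne
  have h_coeff : c = 0 := by
    refine Matrix.eq_zero_of_mulVec_eq_zero h_det (funext fun i => ?_)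
    simpa [Matrix.mulVec, dotProduct, Matrix.projVandermonde_apply, mul_comm] using h_zero i
  simp [h_coeff]

lemma det_mem_of_row_zero_mem {α : Type*} {m : ℕ} (S : Submodule R (α → R))
    (M : α → Matrix (Fin (m + 1)) (Fin (m + 1)) R) (N : Matrix (Fin m) (Fin (m + 1)) R)
    (h_rows : ∀ p i, M p i.succ = N i) (h_zero : ∀ j, (fun p => M p 0 j) ∈ S) :
    (fun p => (M p).det) ∈ S := by
  have h_det : (fun p => (M p).det) = ∑ j : Fin (m + 1),
      ((-1) ^ (j : ℕ) * (N.submatrix id j.succAbove).det) • fun p => M p 0 j := by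
    funext p
    have h_minor (j : Fin (m + 1)) :
        (M p).submatrix Fin.succ j.succAbove = N.submatrix id j.succAbove := by
      ext i l
      simp [h_rows]
    rw [Matrix.det_succ_row_zero, Finset.sum_apply]
    refine sum_congr rfl fun j _ => ?_
    rw [h_minor, Pi.smul_apply, smul_eq_mul]
    ring
  rw [h_det]
  exact S.sum_mem fun j _ => S.smul_mem _ (h_zero j)

end BinaryForms

section VMatrix

variable {ι κ R : Type*} [CommRing R] {n : ℕ}

open Matrix

/-- The matrix of `Vdet`, with rows labelled by an arbitrary type and with the columns carrying
the factors `a i` (left) separated from those carrying the factors `b i` (right). -/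
def vMatrix (n : ℕ) (x y a b : ι → R) : Matrix ι (Fin n ⊕ Fin n) R :=
  fromCols (of fun i j => a i * rectVandermonde y x n i j)
    (of fun i j => b i * rectVandermonde y x n i j)

lemma vMatrix_comp (x y a b : ι → R) (f : κ → ι) :
    vMatrix n (x ∘ f) (y ∘ f) (a ∘ f) (b ∘ f) = (vMatrix n x y a b).submatrix f id := by
  ext i (j | j) <;> rfl

/-- The identification of the column labels of `vMatrix` with those of `Vdet`. -/
def halves (n : ℕ) : Fin n ⊕ Fin n ≃ Fin (2 * n) :=
  finSumFinEquiv.trans (finCongr (two_mul n).symm)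

lemma Vdet_eq_det_vMatrix (x y a b : Fin (2 * n) → R) :
    Vdet n x y a b = ((vMatrix n x y a b).submatrix (halves n) id).det := by
  rw [Vdet, ← det_submatrix_equiv_self (halves n)]
  congr 1
  ext i (j | j)
  · have h_rev : n - 1 - (j : ℕ) = n - (j + 1) := by omega
    simp only [halves, Equiv.coe_trans, submatrix_apply, Function.comp_apply, finCongr_apply,
      finSumFinEquiv_apply_left, of_apply, Fin.val_cast, Fin.val_castAdd, Fin.is_lt, ↓reduceIte,
      h_rev, Fin.val_rev, vMatrix, rectVandermonde_apply, id_eq, fromCols_apply_inl]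
    ring
  · have h_rev : 2 * n - 1 - (j + n : ℕ) = n - (j + 1) := by omega
    simp only [halves, Equiv.coe_trans, submatrix_apply, Function.comp_apply, finCongr_apply,
      finSumFinEquiv_apply_right, Fin.natAdd_eq_addNat, of_apply, Fin.val_cast, Fin.val_addNat,
      add_lt_iff_neg_right, not_lt_zero, ↓reduceIte, add_tsub_cancel_right, h_rev, Fin.val_rev,
      vMatrix, rectVandermonde_apply, id_eq, fromCols_apply_inr]
    ring

lemma det_submatrix_mul_det_submatrix [Fintype ι] [DecidableEq ι] [Fintype κ] [DecidableEq κ]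
    (M N : Matrix ι ι R) (f g : κ ≃ ι) :
    (M.submatrix f g).det * (N.submatrix f g).det = M.det * N.det := by
  have h_det (L : Matrix ι ι R) :
      (L.submatrix f g).det = ((Equiv.Perm.sign (g.symm.trans f) : ℤ) : R) * L.det := by
    rw [← det_permute, ← det_submatrix_equiv_self g]
    congr 1
    ext i j
    simp
  rw [h_det, h_det, mul_mul_mul_comm, ← Int.cast_mul, Int.units_coe_mul_self, Int.cast_one, one_mul]

lemma Vdet_mul_Vdet_eq_det_vMatrix [Fintype κ] [DecidableEq κ] (x y a b c d : Fin (2 * n) → R)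
    (f : κ ≃ Fin (2 * n)) (g : κ ≃ Fin n ⊕ Fin n) :
    Vdet n x y a b * Vdet n x y c d =
      ((vMatrix n (x ∘ f) (y ∘ f) (a ∘ f) (b ∘ f)).submatrix id g).det *
        ((vMatrix n (x ∘ f) (y ∘ f) (c ∘ f) (d ∘ f)).submatrix id g).det := by
  rw [Vdet_eq_det_vMatrix, Vdet_eq_det_vMatrix,
    ← det_submatrix_mul_det_submatrix _ _ (f.trans (halves n).symm) g]
  simp only [vMatrix_comp, submatrix_submatrix, Equiv.coe_trans, ← Function.comp_assoc,
    Equiv.self_comp_symm, Function.id_comp, Function.comp_id]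

lemma map_Vdet {S : Type*} [CommRing S] (f : R →+* S) (x y a b : Fin (2 * n) → R) :
    f (Vdet n x y a b) = Vdet n (f ∘ x) (f ∘ y) (f ∘ a) (f ∘ b) := by
  rw [Vdet, Vdet, RingHom.map_det]
  congr 1
  ext i j
  simp [apply_ite f]

/-- The change of basis, from the monomials of degree `n` to `X ^ n` and the multiples of the
linear form `u Y - X v` by the monomials of degree `n - 1`. -/
def linearMultiples (u v : R) (n : ℕ) : Matrix (Fin (n + 1)) (Fin (n + 1)) R :=
  of fun i => Fin.cons ((1 : Matrix (Fin (n + 1)) (Fin (n + 1)) R) i 0)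
    fun j : Fin n => u * (1 : Matrix (Fin (n + 1)) (Fin (n + 1)) R) i j.succ -
      v * (1 : Matrix (Fin (n + 1)) (Fin (n + 1)) R) i j.castSucc

lemma det_linearMultiples (u v : R) (n : ℕ) : (linearMultiples u v n).det = u ^ n := by
  have h_upper : (linearMultiples u v n).IsUpperTriangular := by
    intro i j hij
    cases j using Fin.cases with
    | zero =>
      have h_zero : i ≠ 0 := hij.ne'
      simp [linearMultiples, one_apply_ne h_zero]
    | succ j =>
      have h_succ : i ≠ j.succ := hij.ne'
      have h_castSucc : i ≠ j.castSucc := ((Fin.castSucc_lt_succ (i := j)).trans hij).ne'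
      simp [linearMultiples, one_apply_ne h_succ, one_apply_ne h_castSucc]
  rw [det_of_isUpperTriangular h_upper, Fin.prod_univ_succ]
  simp [linearMultiples, one_apply_ne (Fin.castSucc_lt_succ).ne']

lemma rectVandermonde_mul_linearMultiples_zero (x y : ι → R) (u v : R) (i : ι) :
    (rectVandermonde y x (n + 1) * linearMultiples u v n) i 0 = x i ^ n := by
  simp [mul_apply, linearMultiples, one_apply, rectVandermonde_apply]

lemma rectVandermonde_mul_linearMultiples_succ (x y : ι → R) (u v : R) (i : ι) (j : Fin n) :
    (rectVandermonde y x (n + 1) * linearMultiples u v n) i j.succ =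
      (u * y i - x i * v) * rectVandermonde y x n i j := by
  have h_mul : (rectVandermonde y x (n + 1) * linearMultiples u v n) i j.succ =
      rectVandermonde y x (n + 1) i j.succ * u - rectVandermonde y x (n + 1) i j.castSucc * v := by
    simp [mul_apply, linearMultiples, one_apply, mul_sub, sum_sub_distrib]
  rw [h_mul]
  simp only [rectVandermonde_apply, Fin.rev_succ, Fin.rev_castSucc, Fin.val_succ,
    Fin.val_castSucc, pow_succ]
  ring

lemma vMatrix_mul_fromBlocks {m : ℕ} (x y a b : ι → R) (T : Matrix (Fin n) (Fin m) R) :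
    vMatrix n x y a b * fromBlocks T 0 0 T =
      fromCols (of fun i j => a i * (rectVandermonde y x n * T) i j)
        (of fun i j => b i * (rectVandermonde y x n * T) i j) := by
  rw [vMatrix, fromCols_mul_fromBlocks]
  ext i (j | j) <;> simp [mul_apply, mul_sum, mul_assoc]

/-- The columns of `vMatrix (n + 1)`, with the two columns of the pure powers of `x` put in
front of those of a copy of `vMatrix n`. -/
noncomputable def splitCols (n : ℕ) : Fin 2 ⊕ (Fin n ⊕ Fin n) ≃ Fin (n + 1) ⊕ Fin (n + 1) :=
  Equiv.ofBijective (Sum.elim ![Sum.inl 0, Sum.inr 0] (Sum.map Fin.succ Fin.succ)) <| by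
    have h_card : Fintype.card (Fin 2 ⊕ (Fin n ⊕ Fin n)) =
        Fintype.card (Fin (n + 1) ⊕ Fin (n + 1)) := by
      simp only [Fintype.card_sum, Fintype.card_fin]
      omega
    refine (Fintype.bijective_iff_surjective_and_card _).2 ⟨?_, h_card⟩
    rintro (j | j) <;> obtain rfl | ⟨j, rfl⟩ := j.eq_zero_or_eq_succ
    exacts [⟨Sum.inl 0, rfl⟩, ⟨Sum.inr (Sum.inl j), rfl⟩, ⟨Sum.inl 1, rfl⟩,
      ⟨Sum.inr (Sum.inr j), rfl⟩]

@[simp]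
lemma splitCols_inl (i : Fin 2) :
    splitCols n (Sum.inl i) = (![Sum.inl 0, Sum.inr 0] : Fin 2 → Fin (n + 1) ⊕ Fin (n + 1)) i := rfl

@[simp]
lemma splitCols_inr (s : Fin n ⊕ Fin n) :
    splitCols n (Sum.inr s) = Sum.map Fin.succ Fin.succ s := rfl

/- The forms divisible by `u Y - X v` vanish at the two rows with the common point `(u, v)`. After
the change of basis by `linearMultiples` only the two leading columns meet these rows. -/
lemma det_vMatrix_mul_pow_of_eq (x y a b : Fin 2 ⊕ (Fin n ⊕ Fin n) → R) {u v : R}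
    (hx : ∀ i, x (Sum.inl i) = u) (hy : ∀ i, y (Sum.inl i) = v) :
    ((vMatrix (n + 1) x y a b).submatrix id (splitCols n)).det * (u ^ n) ^ 2 =
      bracket a b (Sum.inl 0) (Sum.inl 1) * (∏ s, (u * y (Sum.inr s) - x (Sum.inr s) * v)) *
        (vMatrix n (x ∘ Sum.inr) (y ∘ Sum.inr) (a ∘ Sum.inr) (b ∘ Sum.inr)).det * (u ^ n) ^ 2 := by
  set T := linearMultiples u v n
  set M := (vMatrix (n + 1) x y a b * fromBlocks T 0 0 T).submatrix id (splitCols n) with hM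
  have h_det : M.det =
      ((vMatrix (n + 1) x y a b).submatrix id (splitCols n)).det * (u ^ n) ^ 2 := by
    rw [hM, ← submatrix_mul_equiv _ _ id (splitCols n), det_mul, det_submatrix_equiv_self,
      det_fromBlocks_zero₁₂, det_linearMultiples, sq]
  rw [vMatrix_mul_fromBlocks] at hM
  have h₁₁ : M.toBlocks₁₁ =
      of fun i => ![a (Sum.inl i) * u ^ n, b (Sum.inl i) * u ^ n] := by
    ext i j
    fin_cases j <;>
      simp [hM, toBlocks₁₁, T, rectVandermonde_mul_linearMultiples_zero, hx]
  have h₁₂ : M.toBlocks₁₂ = 0 := by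
    ext i (j | j) <;>
      simp [hM, toBlocks₁₂, T, rectVandermonde_mul_linearMultiples_succ, hx, hy]
  have h₂₂ : M.toBlocks₂₂ = of fun s t => (u * y (Sum.inr s) - x (Sum.inr s) * v) *
      vMatrix n (x ∘ Sum.inr) (y ∘ Sum.inr) (a ∘ Sum.inr) (b ∘ Sum.inr) s t := by
    ext s (j | j) <;>
      simp [hM, toBlocks₂₂, T, rectVandermonde_mul_linearMultiples_succ, vMatrix,
        rectVandermonde_apply, mul_left_comm]
  rw [← h_det, ← fromBlocks_toBlocks M, h₁₂, det_fromBlocks_zero₁₂, h₁₁, h₂₂, det_mul_column,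
    det_fin_two]
  simp only [of_apply, cons_val_zero, cons_val_one, bracket]
  ring

end VMatrix

section Expansion

open Matrix

variable {R : Type*} [CommRing R] {n : ℕ}

/-- The rows of `vMatrix (n + 1)`, with the rows `0` and `k + 1` put in front of the others. -/
def frontRows (k : Fin (2 * n + 1)) : Fin 2 ⊕ (Fin n ⊕ Fin n) ≃ Fin (2 * n + 2) :=
  ((Equiv.refl _).sumCongr (halves n)).trans
    (finSumFinEquiv.trans ((finCongr (Nat.add_comm _ _)).trans (frontPair k)))

@[simp]
lemma frontRows_inl_zero (k : Fin (2 * n + 1)) : frontRows k (Sum.inl 0) = 0 :=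
  frontPair_zero k

@[simp]
lemma frontRows_inl_one (k : Fin (2 * n + 1)) : frontRows k (Sum.inl 1) = k.succ :=
  frontPair_one k

@[simp]
lemma frontRows_inr (k : Fin (2 * n + 1)) (s : Fin n ⊕ Fin n) :
    frontRows k (Sum.inr s) = skipPair k (halves n s) := by
  rw [← frontPair_succ_succ]
  simp only [frontRows, Equiv.trans_apply, Equiv.sumCongr_apply, Sum.map_inr]
  congr 1
  ext
  simp

lemma det_vMatrix_frontRows_of_eq [IsDomain R] (x y a b : Fin (2 * n + 2) → R)
    {k : Fin (2 * n + 1)} (h_ne : x 0 ≠ 0) (hx : x k.succ = x 0) (hy : y k.succ = y 0) :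
    ((vMatrix (n + 1) (x ∘ frontRows k) (y ∘ frontRows k) (a ∘ frontRows k)
        (b ∘ frontRows k)).submatrix id (splitCols n)).det =
      bracket a b 0 k.succ * (∏ l, bracket x y 0 (skipPair k l)) *
        (vMatrix n ((x ∘ skipPair k) ∘ halves n) ((y ∘ skipPair k) ∘ halves n)
          ((a ∘ skipPair k) ∘ halves n) ((b ∘ skipPair k) ∘ halves n)).det := by
  have h_bracket : bracket (a ∘ frontRows k) (b ∘ frontRows k) (Sum.inl 0) (Sum.inl 1) =
      bracket a b 0 k.succ := by
    simp [bracket]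
  have h_prod : ∏ s, (x 0 * (y ∘ frontRows k) (Sum.inr s) - (x ∘ frontRows k) (Sum.inr s) * y 0) =
      ∏ l, bracket x y 0 (skipPair k l) := by
    rw [← (halves n).prod_comp]
    simp [bracket]
  have h_rest (z : Fin (2 * n + 2) → R) :
      (z ∘ frontRows k) ∘ Sum.inr = (z ∘ skipPair k) ∘ halves n := by
    ext s
    simp
  refine mul_right_cancel₀ (pow_ne_zero 2 (pow_ne_zero n h_ne)) ?_
  rw [det_vMatrix_mul_pow_of_eq _ _ _ _ (u := x 0) (v := y 0) (by simp [Fin.forall_fin_two, hx])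
    (by simp [Fin.forall_fin_two, hy])]
  simp only [h_bracket, h_prod, h_rest]

/-- The coefficient of the pair `{0, k + 1}` in the expansion of a product of two `Vdet`s. -/
def pairCoeff (x y a b c d : Fin (2 * n + 2) → R) (k : Fin (2 * n + 1)) : R :=
  bracket a b 0 k.succ * bracket c d 0 k.succ *
    (Vdet n (x ∘ skipPair k) (y ∘ skipPair k) (a ∘ skipPair k) (b ∘ skipPair k) *
      Vdet n (x ∘ skipPair k) (y ∘ skipPair k) (c ∘ skipPair k) (d ∘ skipPair k))

lemma Vdet_mul_Vdet_of_eq [IsDomain R] (x y a b c d : Fin (2 * n + 2) → R) {k : Fin (2 * n + 1)}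
    (h_ne : x 0 ≠ 0) (hx : x k.succ = x 0) (hy : y k.succ = y 0) :
    Vdet (n + 1) x y a b * Vdet (n + 1) x y c d =
      pairCoeff x y a b c d k * (∏ l, bracket x y 0 (skipPair k l)) ^ 2 := by
  rw [pairCoeff, Vdet_mul_Vdet_eq_det_vMatrix _ _ _ _ _ _ (halves n) (Equiv.refl _),
    Vdet_mul_Vdet_eq_det_vMatrix (n := n + 1) _ _ _ _ _ _ (frontRows k) (splitCols n),
    det_vMatrix_frontRows_of_eq x y a b h_ne hx hy, det_vMatrix_frontRows_of_eq x y c d h_ne hx hy]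
  simp only [Equiv.coe_refl, submatrix_id_id]
  ring

lemma Vdet_mul_Vdet_update_zero [IsDomain R] (x y a b c d : Fin (2 * n + 2) → R)
    {k : Fin (2 * n + 1)} (hx : x k.succ ≠ 0) :
    Vdet (n + 1) (Function.update x 0 (x k.succ)) (Function.update y 0 (y k.succ)) a b *
        Vdet (n + 1) (Function.update x 0 (x k.succ)) (Function.update y 0 (y k.succ)) c d =
      pairCoeff x y a b c d k * (∏ l, bracket x y k.succ (skipPair k l)) ^ 2 := by
  rw [Vdet_mul_Vdet_of_eq (k := k) _ _ _ _ _ _ (by simpa using hx) (by simp) (by simp)]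
  have h_skip (z : Fin (2 * n + 2) → R) (w : R) :
      Function.update z 0 w ∘ skipPair k = z ∘ skipPair k :=
    Function.update_comp_eq_of_forall_ne _ _ fun l => (skipPair_pos k l).ne'
  simp [pairCoeff, h_skip, bracket, (skipPair_pos k _).ne']

lemma map_pairCoeff {S : Type*} [CommRing S] (f : R →+* S) (x y a b c d : Fin (2 * n + 2) → R)
    (k : Fin (2 * n + 1)) :
    f (pairCoeff x y a b c d k) = pairCoeff (f ∘ x) (f ∘ y) (f ∘ a) (f ∘ b) (f ∘ c) (f ∘ d) k := by
  simp only [pairCoeff, map_mul, map_Vdet, map_bracket, Function.comp_assoc]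

lemma Vdet_update_zero_mem_binaryForms (x y a b : Fin (2 * n + 2) → R) :
    (fun p => Vdet (n + 1) (Function.update x 0 p.1) (Function.update y 0 p.2) a b) ∈
      binaryForms R n := by
  refine det_mem_of_row_zero_mem (m := 2 * n + 1) _ _
    (of fun i j => if (j : ℕ) < n + 1 then a i.succ * x i.succ ^ (n - j) * y i.succ ^ (j : ℕ)
      else b i.succ * x i.succ ^ (2 * n + 1 - j) * y i.succ ^ (j - (n + 1) : ℕ)) ?_ ?_
  · intro p i
    rfl
  · intro j
    simp only [of_apply, Function.update_self, mul_assoc]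
    split_ifs with h
    · exact const_mul_mem_binaryForms (monomial_mem_binaryForms (by omega)) _
    · exact const_mul_mem_binaryForms (monomial_mem_binaryForms (by omega)) _

lemma Vdet_mul_Vdet_eq_sum_of_ne_zero [IsDomain R] (x y a b c d : Fin (2 * n + 2) → R)
    (hx : ∀ k : Fin (2 * n + 1), x k.succ ≠ 0)
    (hxy : ∀ i j : Fin (2 * n + 1), i ≠ j → bracket x y i.succ j.succ ≠ 0) :
    Vdet (n + 1) x y a b * Vdet (n + 1) x y c d =
      ∑ k : Fin (2 * n + 1), pairCoeff x y a b c d k *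
        ((∏ l, bracket x y k.succ (skipPair k l)) * ∏ l, bracket x y 0 (skipPair k l)) := by
  let f : R × R → R := fun p =>
    Vdet (n + 1) (Function.update x 0 p.1) (Function.update y 0 p.2) a b *
        Vdet (n + 1) (Function.update x 0 p.1) (Function.update y 0 p.2) c d -
      ∑ k : Fin (2 * n + 1), pairCoeff x y a b c d k *
        ((∏ l, bracket x y k.succ (skipPair k l)) *
          ∏ l, (p.1 * y (skipPair k l) - x (skipPair k l) * p.2))
  have h_form : f ∈ binaryForms R (2 * n) := by
    have h_mul := mul_mem_binaryForms (Vdet_update_zero_mem_binaryForms x y a b)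
      (Vdet_update_zero_mem_binaryForms x y c d)
    rw [← two_mul] at h_mul
    refine Submodule.sub_mem _ h_mul ?_
    rw [← Finset.sum_fn]
    refine Submodule.sum_mem _ fun k _ => const_mul_mem_binaryForms ?_ _
    exact const_mul_mem_binaryForms (prod_linear_mem_binaryForms _ _) _
  have h_zero (k : Fin (2 * n + 1)) : f (x k.succ, y k.succ) = 0 := by
    simp only [f]
    rw [Vdet_mul_Vdet_update_zero _ _ _ _ _ _ (hx k), sum_eq_single k, sub_eq_zero, sq]
    · rfl
    · intro j _ hj
      obtain ⟨l, hl⟩ := exists_skipPair_eq hj.symm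
      have h_vanish : ∏ l, (x k.succ * y (skipPair j l) - x (skipPair j l) * y k.succ) = 0 :=
        prod_eq_zero (mem_univ l) (by rw [hl, sub_self])
      rw [h_vanish, mul_zero, mul_zero]
    · exact fun h => absurd (mem_univ k) h
  have hf := congrFun (binaryForms_eq_zero_of_forall_eq_zero (x := x ∘ Fin.succ)
    (y := y ∘ Fin.succ) h_form hxy h_zero) (x 0, y 0)
  simpa only [f, Function.update_eq_self, Pi.zero_apply, sub_eq_zero, bracket] using hf

theorem Vdet_mul_Vdet_eq_sum (x y a b c d : Fin (2 * n + 2) → R) :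
    Vdet (n + 1) x y a b * Vdet (n + 1) x y c d =
      ∑ k : Fin (2 * n + 1), pairCoeff x y a b c d k *
        ((∏ l, bracket x y k.succ (skipPair k l)) * ∏ l, bracket x y 0 (skipPair k l)) := by
  let X (s : Fin 6) (i : Fin (2 * n + 2)) : MvPolynomial (Fin 6 × Fin (2 * n + 2)) ℤ :=
    MvPolynomial.X (s, i)
  have h_ne {i j : Fin (2 * n + 2)} (hij : i ≠ j) : bracket (X 0) (X 1) i j ≠ 0 := by
    intro h
    have h_eval := congrArg
      (MvPolynomial.eval fun p => if p = (0, i) ∨ p = (1, j) then (1 : ℤ) else 0) h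
    simp [bracket, X, hij.symm] at h_eval
  let φ := MvPolynomial.eval₂Hom (Int.castRingHom R) fun p : Fin 6 × Fin (2 * n + 2) =>
    ![x, y, a, b, c, d] p.1 p.2
  have hφ (s : Fin 6) : φ ∘ X s = ![x, y, a, b, c, d] s := by
    ext i
    simp [φ, X]
  have h := congrArg φ (Vdet_mul_Vdet_eq_sum_of_ne_zero (X 0) (X 1) (X 2) (X 3) (X 4) (X 5)
    (fun _ => MvPolynomial.X_ne_zero _) fun _ _ hij => h_ne ((Fin.succ_injective _).ne hij))
  simp only [map_mul, map_sum, map_prod, map_Vdet, map_bracket, map_pairCoeff, hφ] at h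
  exact h

lemma pf_mul_prod_bracket_succ (x y a b c d : Fin (2 * n + 2) → R)
    (A : Matrix (Fin (2 * n + 2)) (Fin (2 * n + 2)) R)
    (h_row : ∀ k : Fin (2 * n + 1),
      A 0 k.succ * bracket x y 0 k.succ = bracket a b 0 k.succ * bracket c d 0 k.succ)
    (h_sub : ∀ k : Fin (2 * n + 1), pf (n := n) (A.submatrix (skipPair k) (skipPair k)) *
        ∏ i, ∏ j ∈ Ioi i, bracket (x ∘ skipPair k) (y ∘ skipPair k) i j =
      Vdet n (x ∘ skipPair k) (y ∘ skipPair k) (a ∘ skipPair k) (b ∘ skipPair k) *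
        Vdet n (x ∘ skipPair k) (y ∘ skipPair k) (c ∘ skipPair k) (d ∘ skipPair k)) :
    pf (n := n + 1) A * ∏ i, ∏ j ∈ Ioi i, bracket x y i j =
      Vdet (n + 1) x y a b * Vdet (n + 1) x y c d := by
  rw [pf_succ, sum_mul, Vdet_mul_Vdet_eq_sum]
  refine sum_congr rfl fun k _ => ?_
  have h_sign : (-1 : R) ^ (k : ℕ) * (-1) ^ (k : ℕ) = 1 := by simp [← mul_pow]
  rw [prod_bracket_eq_skipPair x y k, pairCoeff, ← h_sub, ← h_row]
  linear_combination
    (A 0 k.succ * bracket x y 0 k.succ * pf (n := n) (A.submatrix (skipPair k) (skipPair k)) *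
      (∏ l, bracket x y 0 (skipPair k l)) * (∏ l, bracket x y k.succ (skipPair k l)) *
        ∏ i, ∏ j ∈ Ioi i, bracket (x ∘ skipPair k) (y ∘ skipPair k) i j) * h_sign

end Expansion

theorem pf_eq_Vdet_general_general {R : Type*} [CommRing R] (n : ℕ)
    (x y a b c d : Fin (2 * n) → R) (A : Matrix (Fin (2 * n)) (Fin (2 * n)) R)
    (hA : ∀ i j, i < j → A i j * (x i * y j - x j * y i) =
      (a i * b j - a j * b i) * (c i * d j - c j * d i)) :
    pf A * ∏ i, ∏ j ∈ Ioi i, (x i * y j - x j * y i) = Vdet n x y a b * Vdet n x y c d := by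
  induction n with
  | zero => simp [pf_zero, Vdet]
  | succ n ih =>
    refine pf_mul_prod_bracket_succ x y a b c d A (fun k => hA 0 k.succ k.succ_pos) fun k => ?_
    exact ih _ _ _ _ _ _ _ fun i j hij => hA _ _ (skipPair_strictMono k hij)

/-- Theorem `fundamental`:
`Pf[ (a_i b_j − a_j b_i)(c_i d_j − c_j d_i)/(x_i y_j − x_j y_i) ]
  = V^n(X,Y;A,B) V^n(X,Y;C,D) / Π_{i<j}(x_i y_j − x_j y_i)`. -/
theorem pf_eq_Vdet_general (F : Type*) [Field F] (n : ℕ) (hn : 1 ≤ n)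
    (x y a b c d : Fin (2 * n) → F)
    (hxy : ∀ i j : Fin (2 * n), i ≠ j → x i * y j - x j * y i ≠ 0) :
    pf (Matrix.of fun i j : Fin (2 * n) =>
        (a i * b j - a j * b i) * (c i * d j - c j * d i) / (x i * y j - x j * y i)) =
      Vdet n x y a b * Vdet n x y c d /
        ∏ i : Fin (2 * n), ∏ j ∈ Ioi i, (x i * y j - x j * y i) := by
  have h_prod : ∏ i : Fin (2 * n), ∏ j ∈ Ioi i, (x i * y j - x j * y i) ≠ 0 :=
    prod_ne_zero_iff.2 fun i _ => prod_ne_zero_iff.2 fun j hj => hxy i j (mem_Ioi.1 hj).ne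
  exact (eq_div_iff h_prod).2 <| pf_eq_Vdet_general_general n x y a b c d _ fun i j hij =>
    div_mul_cancel₀ _ (hxy i j hij.ne)
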